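/- For all real numbers a, p and all positive integers d, n, the Mneimneh-like sum with all exponents equal to 1 satisfies M_n^{({1}_d)}(a,p) = Σ_{n ≥ n_1 ≥ … ≥ n_d ≥ 1} ((1−p+ap)^{n_d} − (1−p)^{n_d}) / (n_1 n_2 ⋯ n_d). -/

import Mathlib

/-- `ent m α` is the entry `n_{α+1}` (0-indexed access) of the index tuple `m`,
with junk value `1` out of range. -/
def ent {L : ℕ} (m : Fin L → ℕ) (α : ℕ) : ℕ :=
  if h : α < L then m ⟨α, h⟩ else 1

/-- The finite set of index tuples `(n₁,…,n_L)` with `n ≥ n₁ ≥ n₂ ≥ ⋯ ≥ n_L ≥ 1`. -/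
def Idx (n L : ℕ) : Finset (Fin L → ℕ) :=
  (Fintype.piFinset fun _ : Fin L => Finset.Icc 1 n).filter
    fun m => ∀ i j : Fin L, i ≤ j → m j ≤ m i

/-- Generalized multiple harmonic-star value
`ζ*_k(s₁,…,s_d; a) = ∑_{k ≥ n₁ ≥ ⋯ ≥ n_d ≥ 1} a^{n_d}/(n₁^{s₁} ⋯ n_d^{s_d})`. -/
noncomputable def zetaStarK (k : ℕ) (s : List ℕ) (a : ℝ) : ℝ :=
  ∑ m ∈ Idx k s.length,
    a ^ ent m (s.length - 1) / ∏ i : Fin s.length, (m i : ℝ) ^ s.get i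

/-- Mneimneh-like sum
`M_n^{(s₁,…,s_d)}(a,p) = ∑_{k=1}^n C(n,k)·p^k·(1-p)^{n-k}·ζ*_k(s;a)`. -/
noncomputable def M (n : ℕ) (s : List ℕ) (a p : ℝ) : ℝ :=
  ∑ k ∈ Finset.Icc 1 n, (n.choose k : ℝ) * p ^ k * (1 - p) ^ (n - k) * zetaStarK k s a

/-!
A sum over `n ≥ n₁ ≥ ⋯ ≥ n_d ≥ 1` weighted by `1 / (n₁ ⋯ n_d)` is the `d`-th iterate of the
operator `H f n = ∑_{1 ≤ m ≤ n} f m / m`. It suffices that `H` commutes with the binomial mean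
truncated to `k ≥ 1`, because the binomial theorem evaluates that mean at `k ↦ a ^ k`. For the full
binomial mean `E`, Pascal's rule gives `E f (n + 1) - E f n = p E (Δf) n`. Since
`Δ(H f) k = f (k + 1) / (k + 1)`, the absorption identity
`(n + 1) C(n, k) = (k + 1) C(n + 1, k + 1)` turns the factor `1 / (k + 1)` inside the mean into
`1 / (n + 1)` outside it, and this is the recurrence satisfied by `H` of the truncated mean of `f`.
-/

open Finset

theorem ent_coe {L : ℕ} (t : Fin L → ℕ) (i : Fin L) : ent t i = t i :=
  dif_pos i.isLt

theorem mem_Idx {n L : ℕ} {t : Fin L → ℕ} :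
    t ∈ Idx n L ↔ (∀ i, 1 ≤ t i ∧ t i ≤ n) ∧ Antitone t := by
  simp only [Idx, mem_filter, Fintype.mem_piFinset, mem_Icc]
  rfl

theorem Idx_zero (n : ℕ) : Idx n 0 = {default} := by
  ext t
  simp only [mem_Idx, IsEmpty.forall_iff, Subsingleton.antitone, and_self, mem_singleton,
    Subsingleton.elim t default]

theorem cons_mem_Idx {n L m : ℕ} {t : Fin L → ℕ} :
    (Fin.cons m t : Fin (L + 1) → ℕ) ∈ Idx n (L + 1) ↔ m ∈ Icc 1 n ∧ t ∈ Idx m L := by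
  simp only [mem_Idx, mem_Icc, Fin.forall_fin_succ, Fin.cons_zero, Fin.cons_succ, Antitone,
    Fin.succ_le_succ_iff, le_refl, Fin.zero_le, Fin.le_zero_iff, Fin.succ_ne_zero, true_imp_iff,
    false_imp_iff, true_and, implies_true]
  exact ⟨fun ⟨⟨hm, ht⟩, hle, hanti⟩ => ⟨hm, fun i => ⟨(ht i).1, hle i⟩, hanti⟩,
    fun ⟨hm, ht, hanti⟩ => ⟨⟨hm, fun i => ⟨(ht i).1, (ht i).2.trans hm.2⟩⟩,
      fun i => (ht i).2, hanti⟩⟩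

theorem sum_Idx_succ {β : Type*} [AddCommMonoid β] (n L : ℕ) (φ : (Fin (L + 1) → ℕ) → β) :
    ∑ t ∈ Idx n (L + 1), φ t = ∑ m ∈ Icc 1 n, ∑ t ∈ Idx m L, φ (Fin.cons m t) := by
  rw [sum_sigma']
  refine sum_bij' (fun t _ => ⟨t 0, Fin.tail t⟩) (fun x _ => Fin.cons x.1 x.2) ?_ ?_ ?_ ?_ ?_
  · intro t ht
    rwa [mem_sigma, ← cons_mem_Idx, Fin.cons_self_tail]
  · rintro ⟨m, t⟩ hmt
    exact cons_mem_Idx.mpr (mem_sigma.mp hmt)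
  · exact fun t _ => Fin.cons_self_tail t
  · rintro ⟨m, t⟩ _
    rfl
  · intro t _
    rw [Fin.cons_self_tail]

theorem zetaStarK_replicate_one (k d : ℕ) (a : ℝ) :
    zetaStarK k (List.replicate d 1) a =
      ∑ t ∈ Idx k d, a ^ ent t (d - 1) / ∏ i, (t i : ℝ) := by
  simp only [zetaStarK, List.get_eq_getElem, List.getElem_replicate, pow_one]
  rw [List.length_replicate]

section BinomialMean

variable {R : Type*} [CommRing R]

/-- The expectation of `f` under the binomial distribution with parameters `n` and `p`, for `p` in
any commutative ring. -/
def binomialMean (p : R) (f : ℕ → R) (n : ℕ) : R :=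
  ∑ k ∈ range (n + 1), (n.choose k : R) * p ^ k * (1 - p) ^ (n - k) * f k

/-- The binomial mean without the term `k = 0`; the sums `M` are of this form. -/
def truncatedBinomialMean (p : R) (f : ℕ → R) (n : ℕ) : R :=
  ∑ k ∈ Icc 1 n, (n.choose k : R) * p ^ k * (1 - p) ^ (n - k) * f k

theorem binomialMean_eq_add_truncated (p : R) (f : ℕ → R) (n : ℕ) :
    binomialMean p f n = (1 - p) ^ n * f 0 + truncatedBinomialMean p f n := by
  rw [binomialMean, range_eq_Ico, sum_eq_sum_Ico_succ_bot n.succ_pos]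
  simp only [Nat.choose_zero_right, Nat.cast_one, pow_zero, mul_one, one_mul, Nat.sub_zero]
  rfl

theorem binomialMean_sub (p : R) (f g : ℕ → R) (n : ℕ) :
    binomialMean p (fun k => f k - g k) n = binomialMean p f n - binomialMean p g n := by
  simp only [binomialMean, mul_sub, sum_sub_distrib]

theorem binomialMean_pow (a p : R) (n : ℕ) :
    binomialMean p (fun k => a ^ k) n = (1 - p + a * p) ^ n := by
  rw [add_comm, add_pow, binomialMean]
  refine sum_congr rfl fun k _ => ?_
  ring

theorem truncatedBinomialMean_pow (a p : R) (n : ℕ) :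
    truncatedBinomialMean p (fun k => a ^ k) n = (1 - p + a * p) ^ n - (1 - p) ^ n := by
  rw [← binomialMean_pow, binomialMean_eq_add_truncated, pow_zero, mul_one, add_sub_cancel_left]

theorem binomialMean_succ (p : R) (f : ℕ → R) (n : ℕ) :
    binomialMean p f (n + 1) =
      (1 - p) * binomialMean p f n + p * binomialMean p (fun k => f (k + 1)) n := by
  have hfail : (1 - p) * binomialMean p f n =
      ∑ k ∈ range (n + 2), (n.choose k : R) * p ^ k * (1 - p) ^ (n + 1 - k) * f k := by
    rw [sum_range_succ, Nat.choose_succ_self, Nat.cast_zero, zero_mul, zero_mul, zero_mul,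
      add_zero, binomialMean, mul_sum]
    refine sum_congr rfl fun k hk => ?_
    rw [Nat.sub_add_comm (mem_range_succ_iff.mp hk)]
    ring
  rw [hfail, binomialMean, binomialMean, sum_range_succ' _ (n + 1), sum_range_succ' _ (n + 1),
    add_right_comm, mul_sum, ← sum_add_distrib, Nat.choose_zero_right, Nat.choose_zero_right]
  congr 1
  refine sum_congr rfl fun k _ => ?_
  rw [Nat.choose_succ_succ, Nat.add_sub_add_right]
  push_cast
  ring

theorem binomialMean_succ_sub (p : R) (f : ℕ → R) (n : ℕ) :
    binomialMean p f (n + 1) - binomialMean p f n =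
      p * binomialMean p (fun k => f (k + 1) - f k) n := by
  rw [binomialMean_succ, binomialMean_sub]
  ring

end BinomialMean

section HarmonicSum

variable {K : Type*} [Field K]

/-- The summation operator `f ↦ (n ↦ ∑_{1 ≤ m ≤ n} f m / m)`, whose iterates are the nested sums
over `Idx`. -/
def harmonicSum (f : ℕ → K) (n : ℕ) : K :=
  ∑ m ∈ Icc 1 n, f m / m

theorem harmonicSum_zero (f : ℕ → K) : harmonicSum f 0 = 0 :=
  rfl

theorem harmonicSum_succ (f : ℕ → K) (n : ℕ) :
    harmonicSum f (n + 1) = harmonicSum f n + f (n + 1) / (n + 1 : ℕ) :=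
  sum_Icc_succ_top n.succ_pos _

theorem iterate_harmonicSum_succ (f : ℕ → K) (d n : ℕ) :
    harmonicSum^[d + 1] f n = ∑ t ∈ Idx n (d + 1), f (t (Fin.last d)) / ∏ i, (t i : K) := by
  induction d generalizing n with
  | zero =>
    rw [sum_Idx_succ]
    simp only [zero_add, Function.iterate_one, harmonicSum, Idx_zero, sum_singleton,
      Fin.prod_univ_succ, Fin.prod_univ_zero, mul_one, Fin.last_zero, Fin.cons_zero]
  | succ d ih =>
    rw [Function.iterate_succ_apply', harmonicSum, sum_Idx_succ]
    refine sum_congr rfl fun m _ => ?_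
    rw [ih, sum_div]
    refine sum_congr rfl fun t _ => ?_
    simp only [Fin.prod_univ_succ (n := d + 1), ← Fin.succ_last, Fin.cons_zero, Fin.cons_succ]
    rw [div_div, mul_comm]

theorem truncatedBinomialMean_succ_div [CharZero K] (p : K) (f : ℕ → K) (n : ℕ) :
    truncatedBinomialMean p f (n + 1) / (n + 1 : ℕ) =
      p * binomialMean p (fun k => f (k + 1) / (k + 1 : ℕ)) n := by
  have hshift : truncatedBinomialMean p f (n + 1) = ∑ k ∈ range (n + 1),
      ((n + 1).choose (k + 1) : K) * p ^ (k + 1) * (1 - p) ^ (n - k) * f (k + 1) := by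
    simp only [truncatedBinomialMean, ← Nat.add_sub_add_right n 1, range_eq_Ico]
    exact (sum_Ico_add' (fun k => ((n + 1).choose k : K) * p ^ k * (1 - p) ^ (n + 1 - k) * f k)
      0 (n + 1) 1).symm
  rw [hshift, binomialMean, sum_div, mul_sum]
  refine sum_congr rfl fun k _ => ?_
  have habsorb : ((n + 1 : ℕ) : K) * n.choose k = (n + 1).choose (k + 1) * (k + 1 : ℕ) :=
    mod_cast Nat.add_one_mul_choose_eq n k
  have hn : ((n + 1 : ℕ) : K) ≠ 0 := Nat.cast_ne_zero.mpr n.succ_ne_zero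
  have hk : ((k + 1 : ℕ) : K) ≠ 0 := Nat.cast_ne_zero.mpr k.succ_ne_zero
  field_simp
  linear_combination -(p ^ (k + 1) * (1 - p) ^ (n - k) * f (k + 1)) * habsorb

theorem commute_truncatedBinomialMean_harmonicSum [CharZero K] (p : K) :
    Function.Commute (truncatedBinomialMean p) harmonicSum := by
  intro f
  funext n
  have htrunc (n : ℕ) :
      truncatedBinomialMean p (harmonicSum f) n = binomialMean p (harmonicSum f) n := by
    rw [binomialMean_eq_add_truncated, harmonicSum_zero, mul_zero, zero_add]
  induction n with
  | zero => rfl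
  | succ n ih =>
    calc truncatedBinomialMean p (harmonicSum f) (n + 1)
        = truncatedBinomialMean p (harmonicSum f) n +
            p * binomialMean p (fun k => f (k + 1) / (k + 1 : ℕ)) n := by
          rw [htrunc, htrunc, ← sub_eq_iff_eq_add', binomialMean_succ_sub]
          simp only [harmonicSum_succ, add_sub_cancel_left]
      _ = harmonicSum (truncatedBinomialMean p f) n +
            truncatedBinomialMean p f (n + 1) / (n + 1 : ℕ) := by
          rw [ih, truncatedBinomialMean_succ_div]
      _ = harmonicSum (truncatedBinomialMean p f) (n + 1) := (harmonicSum_succ _ n).symm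

theorem stmt_5_general [CharZero K] (a p : K) {d : ℕ} (hd : 0 < d) (n : ℕ) :
    ∑ k ∈ Icc 1 n, (n.choose k : K) * p ^ k * (1 - p) ^ (n - k) *
        ∑ t ∈ Idx k d, a ^ ent t (d - 1) / ∏ i, (t i : K) =
      ∑ t ∈ Idx n d,
        ((1 - p + a * p) ^ ent t (d - 1) - (1 - p) ^ ent t (d - 1)) / ∏ i, (t i : K) := by
  obtain ⟨d, rfl⟩ := Nat.exists_eq_add_one.mpr hd
  have hlast (t : Fin (d + 1) → ℕ) : ent t (d + 1 - 1) = t (Fin.last d) := ent_coe t (Fin.last d)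
  have hcomm := (commute_truncatedBinomialMean_harmonicSum p).iterate_right (d + 1)
  simpa only [truncatedBinomialMean, iterate_harmonicSum_succ, hlast,
    ← truncatedBinomialMean_pow] using congrFun (hcomm (a ^ ·)) n

end HarmonicSum

/-- Transformation of the Mneimneh-like sum for `s = {1}_d`. -/
theorem stmt_5 (a p : ℝ) (d n : ℕ) (hd : 0 < d) (hn : 0 < n) :
    M n (List.replicate d 1) a p =
      ∑ t ∈ Idx n d,
        ((1 - p + a * p) ^ ent t (d - 1) - (1 - p) ^ ent t (d - 1)) /
          ∏ i ∈ Finset.range d, (ent t i : ℝ) := by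
  simpa only [M, zetaStarK_replicate_one, prod_range, ent_coe] using stmt_5_general a p hd n
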